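/- Relation between the Binet–Legendre unit ball and the Legendre ellipsoid: let F be a Minkowski norm on an n-dimensional real vector space V, let Ω = {ξ : F(ξ) < 1} be its unit ball, let g_F be the Binet–Legendre scalar product of F, and let B = {ξ ∈ V : g_F(ξ,ξ) < 1} be the unit ball of g_F. Fix a Lebesgue (Haar) measure λ on V and set s = (λ(Ω)/λ(B))^{1/(n+2)}. Then the dilated ellipsoid s·B has the same moments of inertia as Ω in every codirection: for every linear functional θ ∈ V*, ∫_{s·B} θ(ξ)² dλ(ξ) = ∫_Ω θ(ξ)² dλ(ξ). -/

import Mathlib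

open MeasureTheory
open scoped Pointwise

/-- A Minkowski norm on a real topological vector space: continuous, nonnegative,
positively homogeneous, subadditive, and vanishing only at `0`. -/
def IsMinkowskiNorm {V : Type*} [AddCommGroup V] [Module ℝ V] [TopologicalSpace V]
    (F : V → ℝ) : Prop :=
  Continuous F ∧ (∀ ξ, 0 ≤ F ξ) ∧ (∀ c : ℝ, 0 ≤ c → ∀ ξ, F (c • ξ) = c * F ξ) ∧
    (∀ ξ η, F (ξ + η) ≤ F ξ + F η) ∧ ∀ ξ, F ξ = 0 → ξ = 0

/-- The Binet–Legendre dual scalar product of `F`: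
`g*_F(θ,φ) = ((n+2)/μ(Ω)) ∫_Ω θ(η)·φ(η) dμ(η)` where `Ω = {ξ | F ξ < 1}`. -/
noncomputable def BLdual {V : Type*} [AddCommGroup V] [Module ℝ V] [MeasurableSpace V]
    (n : ℕ) (μ : Measure V) (F : V → ℝ) (θ φ : V →ₗ[ℝ] ℝ) : ℝ :=
  ((n + 2 : ℝ) / (μ {ξ | F ξ < 1}).toReal) * ∫ η in {ξ | F ξ < 1}, θ η * φ η ∂μ

/-- `g` is the Binet–Legendre scalar product of `F`: the bilinear form on `V` dual to
the Binet–Legendre dual scalar product `g*_F` on `V*`. -/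
def IsBLMetric {V : Type*} [AddCommGroup V] [Module ℝ V] [MeasurableSpace V]
    (n : ℕ) (μ : Measure V) (F : V → ℝ) (g : V →ₗ[ℝ] V →ₗ[ℝ] ℝ) : Prop :=
  ∀ ξ : V, ∀ θ : V →ₗ[ℝ] ℝ, BLdual n μ F (g ξ) θ = θ ξ

open Set Metric

/-- The second radial moment of the unit ball. -/
theorem setIntegral_ball_norm_sq {E : Type*} [NormedAddCommGroup E] [NormedSpace ℝ E]
    [FiniteDimensional ℝ E] [Nontrivial E] [MeasurableSpace E] [BorelSpace E]
    (μ : Measure E) [μ.IsAddHaarMeasure] :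
    ∫ x in ball (0 : E) 1, ‖x‖ ^ 2 ∂μ =
      Module.finrank ℝ E / (Module.finrank ℝ E + 2 : ℝ) * μ.real (ball 0 1) := by
  have hpos : 0 < Module.finrank ℝ E := Module.finrank_pos
  have hind : ∀ x : E, (ball (0 : E) 1).indicator (fun x => ‖x‖ ^ 2) x =
      (Iio (1 : ℝ)).indicator (fun y => y ^ 2) ‖x‖ := by
    intro x
    by_cases hx : ‖x‖ < 1 <;> simp [hx, indicator]
  have hrad : ∫ y in Ioi (0 : ℝ),
      y ^ (Module.finrank ℝ E - 1) • (Iio (1 : ℝ)).indicator (fun y => y ^ 2) y =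
        1 / (Module.finrank ℝ E + 2 : ℝ) := by
    have hfun : ∀ y : ℝ,
        y ^ (Module.finrank ℝ E - 1) • (Iio (1 : ℝ)).indicator (fun y => y ^ 2) y =
        (Iio (1 : ℝ)).indicator (fun y => y ^ (Module.finrank ℝ E + 1)) y := by
      intro y
      by_cases hy : y ∈ Iio (1 : ℝ)
      · simp only [indicator_of_mem hy, smul_eq_mul, ← pow_add]
        congr 1
        omega
      · simp [indicator_of_notMem hy]
    simp_rw [hfun]
    rw [setIntegral_indicator measurableSet_Iio, Ioi_inter_Iio, ← integral_Ioc_eq_integral_Ioo,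
      ← intervalIntegral.integral_of_le zero_le_one, integral_pow]
    push_cast
    norm_num
    ring
  rw [← integral_indicator measurableSet_ball]
  simp_rw [hind]
  rw [integral_fun_norm_addHaar μ, hrad]
  simp only [nsmul_eq_mul, smul_eq_mul]
  ring

/-- Integrals of squared linear functionals over a centred Euclidean ball depend only on the norm
of the functional. -/
theorem setIntegral_ball_inner_sq_congr {n : ℕ} {u v : EuclideanSpace ℝ (Fin n)}
    (h : ‖u‖ = ‖v‖) :
    ∫ x in ball (0 : EuclideanSpace ℝ (Fin n)) 1, inner ℝ u x ^ 2 =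
      ∫ x in ball (0 : EuclideanSpace ℝ (Fin n)) 1, inner ℝ v x ^ 2 := by
  set R := (ℝ ∙ (u - v))ᗮ.reflection
  have hR : R u = v := Submodule.reflection_sub h
  have hpre : R ⁻¹' ball 0 1 = ball 0 1 := by
    ext x
    simp
  rw [← R.measurePreserving.setIntegral_preimage_emb R.toMeasurableEquiv.measurableEmbedding
    (fun x => inner ℝ v x ^ 2), hpre, ← hR]
  simp_rw [R.inner_map_map]

/-- The moments of inertia of the Euclidean unit ball. -/
theorem setIntegral_ball_inner_sq {n : ℕ} (μ : Measure (EuclideanSpace ℝ (Fin n)))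
    [μ.IsAddHaarMeasure] (v : EuclideanSpace ℝ (Fin n)) :
    ∫ x in ball (0 : EuclideanSpace ℝ (Fin n)) 1, inner ℝ v x ^ 2 ∂μ =
      ‖v‖ ^ 2 / (n + 2 : ℝ) * μ.real (ball 0 1) := by
  obtain rfl | hn := n.eq_zero_or_pos
  · simp [Subsingleton.elim v 0]
  have : Nonempty (Fin n) := ⟨⟨0, hn⟩⟩
  have hcont : ∀ f : EuclideanSpace ℝ (Fin n) → ℝ, Continuous f →
      IntegrableOn f (ball 0 1) volume := fun f hf =>
    (hf.continuousOn.integrableOn_compact (isCompact_closedBall 0 1)).mono_set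
      ball_subset_closedBall
  have hcoord : ∀ i : Fin n,
      ∫ x in ball (0 : EuclideanSpace ℝ (Fin n)) 1, inner ℝ v x ^ 2 =
        ‖v‖ ^ 2 * ∫ x in ball (0 : EuclideanSpace ℝ (Fin n)) 1, x i ^ 2 := by
    intro i
    rw [setIntegral_ball_inner_sq_congr (v := ‖v‖ • EuclideanSpace.single i (1 : ℝ))
      (by simp [norm_smul]), ← integral_const_mul]
    simp [inner_smul_left, EuclideanSpace.inner_single_left, mul_pow]
  have hsum : (n : ℝ) * ∫ x in ball (0 : EuclideanSpace ℝ (Fin n)) 1, inner ℝ v x ^ 2 =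
      ‖v‖ ^ 2 * ∫ x in ball (0 : EuclideanSpace ℝ (Fin n)) 1, ‖x‖ ^ 2 := by
    simp_rw [EuclideanSpace.real_norm_sq_eq (n := Fin n)]
    rw [integral_finsetSum _ fun i _ => hcont _ (by fun_prop), Finset.mul_sum,
      ← EuclideanSpace.real_norm_sq_eq]
    simp_rw [← hcoord]
    simp
  have hvol : ∫ x in ball (0 : EuclideanSpace ℝ (Fin n)) 1, inner ℝ v x ^ 2 =
      ‖v‖ ^ 2 / (n + 2 : ℝ) * volume.real (ball (0 : EuclideanSpace ℝ (Fin n)) 1) := by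
    rw [setIntegral_ball_norm_sq, finrank_euclideanSpace_fin] at hsum
    have hn' : (n : ℝ) ≠ 0 := by positivity
    apply mul_left_cancel₀ hn'
    rw [hsum]
    ring
  rw [Measure.isAddLeftInvariant_eq_smul μ volume, Measure.restrict_smul,
    integral_smul_nnreal_measure, hvol, measureReal_nnreal_smul_apply, NNReal.smul_def, smul_eq_mul]
  ring

/-- A positive definite symmetric bilinear form is isometric to the Euclidean inner product. -/
theorem exists_linearEquiv_euclideanSpace_inner_eq {V : Type*} [AddCommGroup V] [Module ℝ V]
    [FiniteDimensional ℝ V] (g : V →ₗ[ℝ] V →ₗ[ℝ] ℝ) (hsymm : ∀ x y, g x y = g y x)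
    (hnonneg : ∀ x, 0 ≤ g x x) (hdef : ∀ x, g x x = 0 → x = 0) :
    ∃ L : V ≃ₗ[ℝ] EuclideanSpace ℝ (Fin (Module.finrank ℝ V)),
      ∀ x y, inner ℝ (L x) (L y) = g x y := by
  let core : InnerProductSpace.Core ℝ V :=
    { inner := fun x y => g x y
      conj_inner_symm := fun x y => by simpa using hsymm y x
      re_inner_nonneg := fun x => by simpa using hnonneg x
      add_left := fun x y z => by simp
      smul_left := fun x y r => by simp
      definite := hdef }
  let _ : NormedAddCommGroup V := core.toNormedAddCommGroup
  let _ : InnerProductSpace ℝ V := InnerProductSpace.ofCore core.toCore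
  exact ⟨(stdOrthonormalBasis ℝ V).repr.toLinearEquiv,
    fun x y => (stdOrthonormalBasis ℝ V).repr.inner_map_map x y⟩

/-- The unit ball of a positive definite form `g` has finite positive measure, and its moment of
inertia in the codirection `g x` is `g x x / (n + 2)` times its volume. -/
theorem setIntegral_unitBall_bilin_sq {V : Type*} [NormedAddCommGroup V] [NormedSpace ℝ V]
    [FiniteDimensional ℝ V] [MeasurableSpace V] [BorelSpace V]
    (μ : Measure V) [μ.IsAddHaarMeasure]
    (g : V →ₗ[ℝ] V →ₗ[ℝ] ℝ) (hsymm : ∀ x y, g x y = g y x)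
    (hnonneg : ∀ x, 0 ≤ g x x) (hdef : ∀ x, g x x = 0 → x = 0) :
    0 < μ.real {x | g x x < 1} ∧
      ∀ x, ∫ y in {x | g x x < 1}, g x y ^ 2 ∂μ =
        g x x / (Module.finrank ℝ V + 2 : ℝ) * μ.real {x | g x x < 1} := by
  obtain ⟨L, hL⟩ := exists_linearEquiv_euclideanSpace_inner_eq g hsymm hnonneg hdef
  let A := L.toContinuousLinearEquiv
  have hA : ∀ x y, inner ℝ (A x) (A y) = g x y := hL
  have : (μ.map A).IsAddHaarMeasure := A.isAddHaarMeasure_map μ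
  have hemb : MeasurableEmbedding A := A.toHomeomorph.measurableEmbedding
  have hpre : A ⁻¹' ball 0 1 = {x | g x x < 1} := by
    ext x
    rw [mem_preimage, mem_ball_zero_iff, mem_ofPred_eq, ← hA, real_inner_self_eq_norm_sq,
      sq_lt_one_iff₀ (norm_nonneg _)]
  have hmeas : (μ.map A).real (ball 0 1) = μ.real {x | g x x < 1} := by
    rw [measureReal_def, hemb.map_apply, hpre, measureReal_def]
  refine ⟨?_, fun x => ?_⟩
  · rw [← hmeas]
    exact ENNReal.toReal_pos (measure_ball_pos _ _ one_pos).ne' measure_ball_lt_top.ne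
  · have h := setIntegral_ball_inner_sq (μ.map A) (A x)
    rw [hemb.setIntegral_map, hpre, hmeas, ← real_inner_self_eq_norm_sq] at h
    simpa only [hA] using h

/-- The Legendre ellipsoid of `Ω = {F < 1}` is the dilate `s·B` of the unit ball `B`
of the Binet–Legendre metric `g_F` by the factor `s = (λ(Ω)/λ(B))^{1/(n+2)}`: the
dilated ball `s·B` has the same moment of inertia as `Ω` in every codirection `θ`. -/
theorem statement15 (n : ℕ)
    (V : Type*) [NormedAddCommGroup V] [NormedSpace ℝ V] [FiniteDimensional ℝ V]
    [MeasurableSpace V] [BorelSpace V]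
    (hdim : Module.finrank ℝ V = n)
    (μ : Measure V) [μ.IsAddHaarMeasure]
    (F : V → ℝ) (hF : IsMinkowskiNorm F)
    (g : V →ₗ[ℝ] V →ₗ[ℝ] ℝ) (hg : IsBLMetric n μ F g)
    (Ω B : Set V) (hΩ : Ω = {ξ | F ξ < 1}) (hB : B = {ξ | g ξ ξ < 1})
    (s : ℝ) (hs : s = ((μ Ω).toReal / (μ B).toReal) ^ ((1 : ℝ) / (n + 2))) :
    ∀ θ : V →ₗ[ℝ] ℝ,
      ∫ ξ in s • B, (θ ξ) ^ 2 ∂μ = ∫ ξ in Ω, (θ ξ) ^ 2 ∂μ := by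
  intro θ
  obtain hV | hV := subsingleton_or_nontrivial V
  · have : θ = 0 := Subsingleton.elim _ _
    simp [this]
  have hgΩ : ∀ (ξ : V) (φ : V →ₗ[ℝ] ℝ),
      (n + 2 : ℝ) / (μ Ω).toReal * ∫ η in Ω, g ξ η * φ η ∂μ = φ ξ := by
    rw [hΩ]
    exact hg
  have hsymm : ∀ ξ η, g ξ η = g η ξ := by
    intro ξ η
    rw [← hgΩ η (g ξ), ← hgΩ ξ (g η)]
    simp_rw [mul_comm (g η _)]
  have hnonneg : ∀ ξ, 0 ≤ g ξ ξ := by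
    intro ξ
    rw [← hgΩ ξ (g ξ)]
    have : 0 ≤ ∫ η in Ω, g ξ η * g ξ η ∂μ := integral_nonneg fun η => mul_self_nonneg _
    positivity
  have hker : ∀ ξ, g ξ = 0 → ξ = 0 := by
    intro ξ hξ
    rw [← Module.forall_dual_apply_eq_zero_iff ℝ]
    intro φ
    rw [← hgΩ ξ φ, hξ]
    simp
  have hdef : ∀ ξ, g ξ ξ = 0 → ξ = 0 := by
    intro ξ hξ
    refine hker ξ (LinearMap.ext fun η => ?_)
    have h := LinearMap.BilinForm.apply_mul_apply_le_of_forall_zero_le g hnonneg ξ η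
    rw [hξ, zero_mul, hsymm η ξ] at h
    exact mul_self_eq_zero.mp (h.antisymm (mul_self_nonneg _))
  have hΩpos : 0 < (μ Ω).toReal := by
    refine ENNReal.toReal_nonneg.lt_of_ne' fun h0 => ?_
    obtain ⟨ξ, hξ⟩ := exists_ne (0 : V)
    refine hξ (hdef ξ ?_)
    rw [← hgΩ ξ (g ξ), h0]
    simp
  obtain ⟨hBpos, hBint⟩ := setIntegral_unitBall_bilin_sq μ g hsymm hnonneg hdef
  rw [← hB, measureReal_def] at hBpos
  rw [← hB, measureReal_def, hdim] at hBint
  have hspos : 0 < s := hs ▸ Real.rpow_pos_of_pos (div_pos hΩpos hBpos) _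
  have hspow : s ^ (n + 2) = (μ Ω).toReal / (μ B).toReal := by
    have hcast : (n + 2 : ℝ) = ((n + 2 : ℕ) : ℝ) := by push_cast; rfl
    rw [hs, hcast, one_div, Real.rpow_inv_natCast_pow (div_pos hΩpos hBpos).le (by omega)]
  obtain ⟨ξ, rfl⟩ : ∃ ξ, g ξ = θ :=
    (LinearMap.injective_iff_surjective_of_finrank_eq_finrank
      (Subspace.dual_finrank_eq (K := ℝ) (V := V)).symm).mp
      ((injective_iff_map_eq_zero g).mpr hker) θ
  have hscale : ∫ η in s • B, g ξ η ^ 2 ∂μ = s ^ (n + 2) * ∫ η in B, g ξ η ^ 2 ∂μ := by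
    have h := Measure.setIntegral_comp_smul_of_pos μ (fun η => g ξ η ^ 2) B hspos
    simp only [map_smul, smul_eq_mul, mul_pow, integral_const_mul, hdim] at h
    rw [pow_add, mul_assoc, h, mul_inv_cancel_left₀ (by positivity)]
  have hΩint := hgΩ ξ (g ξ)
  simp_rw [← sq] at hΩint
  rw [hscale, hspow, hBint, ← hΩint]
  field_simp
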